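/- Let (e_n) be an almost greedy basis of an infinite-dimensional separable Banach space X (there exists C₀ ≥ 1 with ‖x − P_A(x)‖ ≤ C₀·σ̃_m(x) for all x, m, and A ∈ G(x,m)). Then there is a constant C > 0 such that for every x ∈ X, every m ∈ ℕ, and every A ∈ G(x,m): ‖x − P_A(x)‖ ≤ C·inf{‖x − t·1_{εB}‖ : t a scalar, B ⊆ ℕ finite with |B| ≤ m and B ∩ A = ∅, ε a sign sequence}. -/

import Mathlib

/-!
Write `y = x - t • ∑ n ∈ B, ε n • e n` and let `α` be the least modulus of the coefficients of `x`
on `A`. The set `G = A ∪ {n ∈ B : α ≤ |f n y|}` is greedy for `y`, and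

`x - P_A x = (y - P_G y) + P_B x - P_{B \ G} y`,

where the last two vectors are supported on subsets of `B`, have coefficients of modulus at most
`α`, and `|B| ≤ |A| ≤ |G|`. Two facts about almost greedy bases finish the proof.

* `norm_sub_gproj_le` (quasi-greediness): `‖y - P_G y‖ ≤ C₀ ‖y‖`, obtained by comparing `G` with
  sets `F` of the same cardinality so far out that `P_F y` is negligible.
* `norm_sum_le_of_greedy`: a vector with at most `|G|` coefficients, all of modulus at most
  `min_G |f n y|`, has norm at most `C₀² (1 + C₀) ‖y‖`. It rests on `swap`, which compares two
  disjointly supported vectors `u`, `w` by applying the almost greedy inequality to `u + w`; a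
  constant-coefficient vector disjoint from both serves as intermediary when the supports overlap.
-/

open Finset

noncomputable section

variable {𝕜 : Type*} [RCLike 𝕜] {X : Type*} [NormedAddCommGroup X] [NormedSpace 𝕜 X]

/-- The coordinate projection `P_A x = ∑_{n ∈ A} e_n^*(x) • e_n`. -/
def gproj (e : ℕ → X) (f : ℕ → X →L[𝕜] 𝕜) (A : Finset ℕ) (x : X) : X :=
  ∑ n ∈ A, f n x • e n

/-- `A` is a greedy set of `x` of order `m` (with respect to the functionals `f`):
`|A| = m` and `min_{n ∈ A} |e_n^*(x)| ≥ sup_{n ∉ A} |e_n^*(x)|`. -/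
def IsGreedySet (f : ℕ → X →L[𝕜] 𝕜) (x : X) (m : ℕ) (A : Finset ℕ) : Prop :=
  A.card = m ∧ ∀ a ∈ A, ∀ b ∉ A, ‖f b x‖ ≤ ‖f a x‖

/-- A semi-normalized basis of `X` together with its biorthogonal functionals:
the linear span of `(e_n)` is dense, `f_j (e_k) = δ_{jk}`, and both sequences are
semi-normalized. -/
structure SNBasis (e : ℕ → X) (f : ℕ → X →L[𝕜] 𝕜) : Prop where
  dense_span : Dense (Submodule.span 𝕜 (Set.range e) : Set X)
  biorth : ∀ j k, f j (e k) = if j = k then 1 else 0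
  semi_normalized : ∃ c₁ c₂ : ℝ, 0 < c₁ ∧
    ∀ n, c₁ ≤ ‖e n‖ ∧ c₁ ≤ ‖f n‖ ∧ ‖e n‖ ≤ c₂ ∧ ‖f n‖ ≤ c₂

/-- `σ̃_m(x) = inf {‖x - P_A x‖ : A ⊆ ℕ finite, |A| = m}`. -/
def sigmaTilde (e : ℕ → X) (f : ℕ → X →L[𝕜] 𝕜) (m : ℕ) (x : X) : ℝ :=
  sInf {r | ∃ A : Finset ℕ, A.card = m ∧ r = ‖x - gproj e f A x‖}

/-- `σ̌_m(x) = inf {‖x - P_I x‖ : I an interval of consecutive integers, |I| = m}`. -/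
def sigmaCheck (e : ℕ → X) (f : ℕ → X →L[𝕜] 𝕜) (m : ℕ) (x : X) : ℝ :=
  sInf {r | ∃ a : ℕ, r = ‖x - gproj e f (Finset.Ico a (a + m)) x‖}

/-- The almost greedy inequality with constant `C₀`. -/
def AGWith (e : ℕ → X) (f : ℕ → X →L[𝕜] 𝕜) (C₀ : ℝ) : Prop :=
  ∀ (x : X) (m : ℕ) (A : Finset ℕ), IsGreedySet f x m A →
    ‖x - gproj e f A x‖ ≤ C₀ * sigmaTilde e f m x

lemma sigmaTilde_le (e : ℕ → X) (f : ℕ → X →L[𝕜] 𝕜) (x : X) (F : Finset ℕ) :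
    sigmaTilde e f F.card x ≤ ‖x - gproj e f F x‖ := by
  apply csInf_le
  · refine ⟨0, ?_⟩
    rintro r ⟨A, -, rfl⟩
    exact norm_nonneg _
  · exact ⟨F, rfl, rfl⟩

lemma coeff_sum {e : ℕ → X} {f : ℕ → X →L[𝕜] 𝕜} (hb : SNBasis e f) (D : Finset ℕ) (c : ℕ → 𝕜)
    (n : ℕ) : f n (∑ k ∈ D, c k • e k) = if n ∈ D then c n else 0 := by
  simp [map_sum, hb.biorth]

lemma exists_forall_coeff_lt {e : ℕ → X} {f : ℕ → X →L[𝕜] 𝕜} (hb : SNBasis e f) (x : X)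
    {δ : ℝ} (hδ : 0 < δ) : ∃ N, ∀ n ≥ N, ‖f n x‖ < δ := by
  obtain ⟨c₁, c₂, h1, h⟩ := hb.semi_normalized
  have hc2 : 0 < c₂ := h1.trans_le ((h 0).1.trans (h 0).2.2.1)
  obtain ⟨v, hv, hd⟩ := hb.dense_span.exists_dist_lt x (div_pos hδ hc2)
  have hN : ∃ N, ∀ n ≥ N, f n v = 0 := by
    clear hd
    induction hv using Submodule.span_induction with
    | mem v hv =>
      obtain ⟨k, rfl⟩ := hv
      exact ⟨k + 1, fun n hn => by rw [hb.biorth, if_neg (by omega)]⟩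
    | zero => exact ⟨0, fun n _ => map_zero _⟩
    | add u v _ _ hu hv =>
      obtain ⟨N, hN⟩ := hu
      obtain ⟨M, hM⟩ := hv
      exact ⟨max N M, fun n hn => by
        rw [map_add, hN n (le_of_max_le_left hn), hM n (le_of_max_le_right hn), add_zero]⟩
    | smul a v _ hv =>
      obtain ⟨N, hN⟩ := hv
      exact ⟨N, fun n hn => by rw [map_smul, hN n hn, smul_zero]⟩
  obtain ⟨N, hN⟩ := hN
  refine ⟨N, fun n hn => ?_⟩
  have h2 : f n x = f n (x - v) := by rw [map_sub, hN n hn, sub_zero]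
  rw [h2]
  rw [dist_eq_norm] at hd
  calc ‖f n (x - v)‖ ≤ ‖f n‖ * ‖x - v‖ := (f n).le_opNorm _
    _ ≤ c₂ * ‖x - v‖ := by gcongr; exact (h n).2.2.2
    _ < c₂ * (δ / c₂) := by gcongr
    _ = δ := by field_simp

lemma sigmaTilde_le_norm {e : ℕ → X} {f : ℕ → X →L[𝕜] 𝕜} (hb : SNBasis e f) (x : X) (m : ℕ) :
    sigmaTilde e f m x ≤ ‖x‖ := by
  obtain ⟨c₁, c₂, h1, h⟩ := hb.semi_normalized
  have hc2 : 0 < c₂ := h1.trans_le ((h 0).1.trans (h 0).2.2.1)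
  refine le_of_forall_pos_le_add fun η hη => ?_
  obtain ⟨N, hN⟩ := exists_forall_coeff_lt hb x (δ := η / ((m + 1) * c₂)) (by positivity)
  have hF := sigmaTilde_le e f x (Finset.Ico N (N + m))
  rw [Nat.card_Ico, Nat.add_sub_cancel_left] at hF
  have hP : ‖gproj e f (Finset.Ico N (N + m)) x‖ ≤ η := by
    calc ‖gproj e f (Finset.Ico N (N + m)) x‖
        ≤ ∑ n ∈ Finset.Ico N (N + m), η / ((m + 1) * c₂) * c₂ := by
          refine norm_sum_le_of_le _ fun n hn => ?_
          rw [norm_smul]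
          have := (hN n (Finset.mem_Ico.1 hn).1).le
          have := (h n).2.2.1
          gcongr
      _ = m * (η / (m + 1)) := by
          rw [Finset.sum_const, Nat.card_Ico, Nat.add_sub_cancel_left, nsmul_eq_mul]
          field_simp
      _ ≤ (m + 1) * (η / (m + 1)) := by gcongr; linarith
      _ = η := by field_simp
  linarith [norm_sub_le x (gproj e f (Finset.Ico N (N + m)) x)]

lemma norm_sub_gproj_le {e : ℕ → X} {f : ℕ → X →L[𝕜] 𝕜} (hb : SNBasis e f) {C₀ : ℝ}
    (hC : 1 ≤ C₀) (hag : AGWith e f C₀) {x : X} {m : ℕ} {A : Finset ℕ}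
    (hA : IsGreedySet f x m A) : ‖x - gproj e f A x‖ ≤ C₀ * ‖x‖ :=
  (hag x m A hA).trans (by gcongr; exact sigmaTilde_le_norm hb x m)

/-- Compare disjointly supported vectors `u` on `G` and `w` on `D`, the coefficients of `u`
dominating those of `w`: in `u + w` the set `G` is greedy, removing it leaves `w`, while removing
`D` (enlarged to the cardinality of `G`) leaves `u`. -/
lemma swap {e : ℕ → X} {f : ℕ → X →L[𝕜] 𝕜} (hb : SNBasis e f) {C₀ : ℝ} (hC : 1 ≤ C₀)
    (hag : AGWith e f C₀) {G D : Finset ℕ} (hGD : Disjoint G D) (hcard : D.card ≤ G.card)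
    (a c : ℕ → 𝕜) (h : ∀ n ∈ G, ∀ k ∈ D, ‖c k‖ ≤ ‖a n‖) :
    ‖∑ n ∈ D, c n • e n‖ ≤ C₀ * ‖∑ n ∈ G, a n • e n‖ := by
  obtain ⟨T, hT, hTc⟩ := Infinite.exists_superset_card_eq (G ∪ D) (2 * G.card)
    (by rw [Finset.card_union_of_disjoint hGD]; omega)
  have hDT : D ⊆ T \ G := fun n hn => Finset.mem_sdiff.2
    ⟨hT (Finset.mem_union_right _ hn), Finset.disjoint_right.1 hGD hn⟩
  have hGT : G ⊆ T := Finset.subset_union_left.trans hT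
  have hcT : (T \ G).card = G.card := by
    rw [Finset.card_sdiff_of_subset hGT]; omega
  set z := ∑ n ∈ G, a n • e n + ∑ n ∈ D, c n • e n with hz
  have hfz : ∀ n, f n z = (if n ∈ G then a n else 0) + (if n ∈ D then c n else 0) := fun n => by
    rw [hz, map_add, coeff_sum hb, coeff_sum hb]
  have hgr : IsGreedySet f z G.card G := by
    refine ⟨rfl, fun n hn k hk => ?_⟩
    rw [hfz, hfz, if_pos hn, if_neg (Finset.disjoint_left.1 hGD hn), if_neg hk, zero_add, add_zero]
    split_ifs with hkD
    · exact h n hn k hkD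
    · simp
  have hPG : gproj e f G z = ∑ n ∈ G, a n • e n :=
    Finset.sum_congr rfl fun n hn => by
      rw [hfz, if_pos hn, if_neg (Finset.disjoint_left.1 hGD hn), add_zero]
  have hPT : gproj e f (T \ G) z = ∑ n ∈ D, c n • e n := by
    rw [gproj, ← Finset.sum_subset hDT]
    · exact Finset.sum_congr rfl fun n hn => by
        rw [hfz, if_pos hn, if_neg (Finset.disjoint_right.1 hGD hn), zero_add]
    · intro n hn hnD
      rw [hfz, if_neg hnD, if_neg (Finset.mem_sdiff.1 hn).2, add_zero, zero_smul]
  have h1 := hag z _ G hgr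
  have h2 := sigmaTilde_le e f z (T \ G)
  rw [hcT, hPT, hz, add_sub_cancel_right] at h2
  rw [hPG] at h1
  rw [hz, add_sub_cancel_left] at h1
  exact h1.trans (by gcongr)

/-- A vector with at most `|G|` coefficients, none exceeding the smallest coefficient of `y` on its
greedy set `G`, is controlled by `y`; the supports may overlap. -/
lemma norm_sum_le_of_greedy {e : ℕ → X} {f : ℕ → X →L[𝕜] 𝕜} (hb : SNBasis e f) {C₀ : ℝ}
    (hC : 1 ≤ C₀) (hag : AGWith e f C₀) {y : X} {m : ℕ} {G D : Finset ℕ}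
    (hG : IsGreedySet f y m G) (hcard : D.card ≤ G.card) {α : ℝ} (hα : 0 ≤ α) (c : ℕ → 𝕜)
    (hy : ∀ n ∈ G, α ≤ ‖f n y‖) (hc : ∀ n ∈ D, ‖c n‖ ≤ α) :
    ‖∑ n ∈ D, c n • e n‖ ≤ C₀ * (C₀ * ((1 + C₀) * ‖y‖)) := by
  -- `E` is a set of cardinality `|G|`, disjoint from both `G` and `D`.
  obtain ⟨T, hT, hTc⟩ := Infinite.exists_superset_card_eq (G ∪ D) ((G ∪ D).card + G.card)
    (by omega)
  set E := T \ (G ∪ D) with hE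
  have hcE : E.card = G.card := by
    rw [hE, Finset.card_sdiff_of_subset hT]; omega
  have hdE : Disjoint E (G ∪ D) := Finset.sdiff_disjoint
  rw [Finset.disjoint_union_right] at hdE
  have hn : ‖(α : 𝕜)‖ = α := by rw [RCLike.norm_ofReal, abs_of_nonneg hα]
  have h1 := swap hb hC hag hdE.2 (hcard.trans hcE.ge) (fun _ => (α : 𝕜)) c
    (fun _ _ k hk => by rw [hn]; exact hc k hk)
  have h2 := swap hb hC hag hdE.1.symm hcE.le (fun n => f n y) (fun _ => (α : 𝕜))
    (fun n hnG _ _ => by rw [hn]; exact hy n hnG)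
  have h3 : ‖∑ n ∈ G, f n y • e n‖ ≤ (1 + C₀) * ‖y‖ := by
    have h4 := norm_sub_gproj_le hb hC hag hG
    have h5 := norm_sub_le y (y - gproj e f G y)
    rw [sub_sub_cancel] at h5
    change ‖gproj e f G y‖ ≤ _
    linarith
  exact h1.trans (by gcongr; exact h2.trans (by gcongr))

/-- an almost greedy basis satisfies a one-dimensional approximation
bound with disjointly supported signed indicator sums. -/
theorem stmt3 [CompleteSpace X] [TopologicalSpace.SeparableSpace X]
    (hinf : ¬FiniteDimensional 𝕜 X)
    (e : ℕ → X) (f : ℕ → X →L[𝕜] 𝕜) (hb : SNBasis e f)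
    (hag : ∃ C₀ : ℝ, 1 ≤ C₀ ∧ ∀ (x : X) (m : ℕ) (A : Finset ℕ), IsGreedySet f x m A →
      ‖x - gproj e f A x‖ ≤ C₀ * sigmaTilde e f m x) :
    ∃ C : ℝ, 0 < C ∧ ∀ (x : X) (m : ℕ) (A : Finset ℕ), IsGreedySet f x m A →
      ∀ (t : 𝕜) (B : Finset ℕ) (ε : ℕ → 𝕜), B.card ≤ m → Disjoint B A →
        (∀ n, ‖ε n‖ = 1) →
        ‖x - gproj e f A x‖ ≤ C * ‖x - t • ∑ n ∈ B, ε n • e n‖ := by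
  obtain ⟨C₀, hC, hag⟩ := hag
  have hC0 : 0 < C₀ := by linarith
  refine ⟨C₀ + 2 * (C₀ * (C₀ * (1 + C₀))), by positivity, ?_⟩
  intro x m A hA t B ε hBm hBA hε
  obtain ⟨α, hα, hαA, hαB⟩ : ∃ α : ℝ, 0 ≤ α ∧ (∀ n ∈ A, α ≤ ‖f n x‖) ∧
      (A.Nonempty → ∀ n ∉ A, ‖f n x‖ ≤ α) := by
    rcases A.eq_empty_or_nonempty with rfl | hne
    · exact ⟨0, le_rfl, by simp, by simp⟩
    · obtain ⟨a, ha, hmin⟩ := A.exists_min_image (fun n => ‖f n x‖) hne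
      exact ⟨‖f a x‖, norm_nonneg _, hmin, fun _ n hn => hA.2 a ha n hn⟩
  set y := x - t • ∑ n ∈ B, ε n • e n with hy
  have hfy : ∀ n, f n y = f n x - if n ∈ B then t * ε n else 0 := fun n => by
    rw [hy, map_sub, map_smul, coeff_sum hb, smul_eq_mul, mul_ite, mul_zero]
  have hfyB : ∀ n, n ∉ B → f n y = f n x := fun n hn => by rw [hfy, if_neg hn, sub_zero]
  have hfyA : ∀ n ∈ A, f n y = f n x := fun n hn => hfyB n (Finset.disjoint_right.1 hBA hn)
  set B₁ := B.filter (fun n => α ≤ ‖f n y‖) with hB₁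
  set B₂ := B.filter (fun n => ¬ α ≤ ‖f n y‖) with hB₂
  have hAB₁ : Disjoint A B₁ := (hBA.mono_left (Finset.filter_subset _ _)).symm
  have hGy : ∀ n ∈ A ∪ B₁, α ≤ ‖f n y‖ := by
    intro n hn
    rcases Finset.mem_union.1 hn with hn | hn
    · rw [hfyA n hn]; exact hαA n hn
    · exact (Finset.mem_filter.1 hn).2
  have hBc : B.card ≤ (A ∪ B₁).card :=
    hBm.trans (hA.1.ge.trans (Finset.card_le_card Finset.subset_union_left))
  have hG : IsGreedySet f y (A ∪ B₁).card (A ∪ B₁) := by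
    refine ⟨rfl, fun a ha b hbG => ?_⟩
    -- If `A = ∅` then `m = 0`, so `B = ∅` and `A ∪ B₁` is empty.
    have hne : A.Nonempty := by
      rw [Finset.nonempty_iff_ne_empty]
      rintro rfl
      have : B = ∅ := by
        rw [← Finset.card_eq_zero]
        have := hA.1
        simp only [Finset.card_empty] at this
        omega
      simp [hB₁, this] at ha
    refine le_trans ?_ (hGy a ha)
    rw [Finset.mem_union, not_or] at hbG
    by_cases hbB : b ∈ B
    · by_contra hlt
      exact hbG.2 (Finset.mem_filter.2 ⟨hbB, (not_le.1 hlt).le⟩)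
    · rw [hfyB b hbB]; exact hαB hne b hbG.1
  have hxB : ∀ n ∈ B, ‖f n x‖ ≤ α := by
    intro n hn
    refine hαB ?_ n (Finset.disjoint_left.1 hBA hn)
    rw [← Finset.card_pos, hA.1]
    exact (Finset.card_pos.2 ⟨n, hn⟩).trans_le hBm
  have h1 := norm_sub_gproj_le hb hC hag hG
  have h2 := norm_sum_le_of_greedy hb hC hag hG hBc hα (fun n => f n x) hGy hxB
  have h3 := norm_sum_le_of_greedy hb hC hag hG (D := B₂)
    ((Finset.card_le_card (Finset.filter_subset _ _)).trans hBc) hα (fun n => f n y) hGy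
    (fun n hn => (not_le.1 (Finset.mem_filter.1 hn).2).le)
  have hid : x - gproj e f A x = (y - gproj e f (A ∪ B₁) y) + ∑ n ∈ B, f n x • e n
      - ∑ n ∈ B₂, f n y • e n := by
    have e1 : gproj e f (A ∪ B₁) y = gproj e f A x + ∑ n ∈ B₁, f n y • e n := by
      rw [gproj, Finset.sum_union hAB₁, gproj]
      congr 1
      exact Finset.sum_congr rfl fun n hn => by rw [hfyA n hn]
    have e2 : ∑ n ∈ B₁, f n y • e n + ∑ n ∈ B₂, f n y • e n
        = ∑ n ∈ B, f n x • e n - t • ∑ n ∈ B, ε n • e n := by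
      rw [hB₁, hB₂, Finset.sum_filter_add_sum_filter_not, Finset.smul_sum,
        ← Finset.sum_sub_distrib]
      exact Finset.sum_congr rfl fun n hn => by rw [hfy, if_pos hn, sub_smul, mul_smul]
    rw [e1, eq_sub_of_add_eq e2, hy]
    abel
  rw [hid]
  have h4 := norm_sub_le ((y - gproj e f (A ∪ B₁) y) + ∑ n ∈ B, f n x • e n)
    (∑ n ∈ B₂, f n y • e n)
  have h5 := norm_add_le (y - gproj e f (A ∪ B₁) y) (∑ n ∈ B, f n x • e n)
  linarith
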